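/- Let N ≥ 1, let A be an N×N real matrix, and let v ∈ ℝ^N be such that (A^τ)_{i,j} → v_j as τ → ∞ for all pairs (i,j). Let w : ℕ → ℝ^N be a sequence such that for each j there is B_j with |w_{j,s}| ≤ B_j for all s, and such that for each j, (1/t) ∑_{s=0}^{t-1} w_{j,s} → c_j as t → ∞. Then for every i, lim_{t→∞} (1/t) ∑_{τ=1}^{t} ∑_{j=1}^N (A^τ)_{i,j} w_{j,t-τ} = ∑_{j=1}^N v_j c_j. -/

import Mathlib

open Filter Finset

theorem scalar_aux (a : ℕ → ℝ) (v : ℝ) (ha : Tendsto a atTop (nhds v)) (w : ℕ → ℝ) (B : ℝ)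
    (hB : ∀ s, |w s| ≤ B) (c : ℝ)
    (hc : Tendsto (fun t : ℕ => (1 / (t : ℝ)) * ∑ s ∈ Finset.range t, w s) atTop (nhds c)) :
    Tendsto (fun t : ℕ => (1 / (t : ℝ)) * ∑ τ ∈ Finset.Icc 1 t, a τ * w (t - τ))
      atTop (nhds (v * c)) := by
  have h1 : Tendsto (fun k => |a (k + 1) - v| * B) atTop (nhds 0) := by
    have h := ((((tendsto_add_atTop_iff_nat 1).2 ha).sub_const v).abs).mul_const B
    simpa using h
  have h2 := h1.cesaro
  have h3 : Tendsto (fun t : ℕ => (1 / (t : ℝ)) *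
      ∑ k ∈ Finset.range t, (a (k + 1) - v) * w (t - 1 - k)) atTop (nhds 0) := by
    refine squeeze_zero_norm (fun t => ?_) h2
    rw [Real.norm_eq_abs, abs_mul, one_div, abs_of_nonneg (by positivity : (0 : ℝ) ≤ (t : ℝ)⁻¹)]
    refine mul_le_mul_of_nonneg_left ?_ (by positivity)
    refine (Finset.abs_sum_le_sum_abs _ _).trans (Finset.sum_le_sum fun k _ => ?_)
    rw [abs_mul]
    exact mul_le_mul_of_nonneg_left (hB _) (abs_nonneg _)
  have h4 := h3.add (hc.const_mul v)
  rw [zero_add] at h4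
  refine h4.congr fun t => ?_
  rw [← Finset.sum_range_reflect w t]
  have h5 : ∑ τ ∈ Finset.Icc 1 t, a τ * w (t - τ)
      = ∑ k ∈ Finset.range t, a (k + 1) * w (t - 1 - k) := by
    have h6 : Finset.Icc 1 t = Finset.Ico (0 + 1) (t + 1) := by
      ext x; simp only [Finset.mem_Icc, Finset.mem_Ico]; omega
    rw [h6, ← Finset.sum_Ico_add' (fun τ => a τ * w (t - τ)), Finset.range_eq_Ico]
    refine Finset.sum_congr rfl fun k _ => ?_
    rw [show t - (k + 1) = t - 1 - k by omega]
  rw [h5]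
  simp only [sub_mul, Finset.sum_sub_distrib, ← Finset.mul_sum]
  ring

/-- Evaluation of the rate exponent (Equations (9)–(15)) in Theorem 1: if the matrix
powers of `A` converge entrywise to `v` and the increments `w` are bounded with Cesàro
means converging to `c`, then the weighted time-average converges to `∑ j, v j * c j`. -/
theorem stmt_5 (N : ℕ) (hN : 1 ≤ N) (A : Matrix (Fin N) (Fin N) ℝ)
    (v : Fin N → ℝ)
    (hv : ∀ i j, Tendsto (fun τ : ℕ => (A ^ τ) i j) atTop (nhds (v j)))
    (w : ℕ → Fin N → ℝ) (B : Fin N → ℝ)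
    (hw_bdd : ∀ j s, |w s j| ≤ B j)
    (c : Fin N → ℝ)
    (hw_cesaro : ∀ j, Tendsto (fun t : ℕ => (1 / (t : ℝ)) * ∑ s ∈ Finset.range t, w s j)
      atTop (nhds (c j))) :
    ∀ i, Tendsto
      (fun t : ℕ => (1 / (t : ℝ)) * ∑ τ ∈ Finset.Icc 1 t, ∑ j, (A ^ τ) i j * w (t - τ) j)
      atTop (nhds (∑ j, v j * c j)) := by
  intro i
  have h := tendsto_finsetSum Finset.univ fun j _ =>
    scalar_aux (fun τ => (A ^ τ) i j) (v j) (hv i j) (fun s => w s j) (B j) (hw_bdd j) (c j)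
      (hw_cesaro j)
  refine h.congr fun t => ?_
  rw [← Finset.mul_sum, Finset.sum_comm]
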